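/- arXiv:1904.07807 — 3 statements merged into one kernel-verified Lean document; each statement's English description precedes it below -/
import Mathlib

section
/- Let τ ∈ ℂ with Im τ > 0. Consider the set S of real numbers of the form (⨅_{t ∈ [0,1]} ∫_{0}^{1} ρ(s + t·τ) ds)² / (Im τ · ∫_{[0,1]×[0,1]} ρ(s + t·τ)² ds dt), where ρ ranges over all nonnegative measurable functions ρ : ℂ → ℝ with 0 < ∫_{[0,1]×[0,1]} ρ(s + t·τ)² ds dt < ∞. Then 1/Im τ is the greatest element of S; the supremum is attained by ρ ≡ 1. -/
/-!
For the upper bound, the unit square `Q` has measure one. If `L` is the infimum of the horizontal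
`ρ`-lengths, Fubini gives `L ≤ ∬ ρ`, and expanding `0 ≤ ∬ (ρ - L)²` gives
`∬ ρ² ≥ 2 L ∬ ρ - L² ≥ L²` because `L ≥ 0`. Hence every quotient is at most `1 / Im τ`, and
`ρ ≡ 1` gives equality.
-/

open MeasureTheory

/-- The length-area inequality on the unit square. Slices on which `f` fails to be integrable
have Bochner integral `0`, which only lowers the infimum. -/
lemma sq_iInf_slice_le (f : ℝ × ℝ → ℝ) (hf : Measurable f) (h0 : ∀ p, 0 ≤ f p)
    (hi : IntegrableOn (fun p => f p ^ 2) (Set.Icc (0 : ℝ) 1 ×ˢ Set.Icc (0 : ℝ) 1)) :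
    (⨅ t : Set.Icc (0 : ℝ) 1, ∫ s in (0 : ℝ)..1, f (s, t)) ^ 2 ≤
      ∫ p in Set.Icc (0 : ℝ) 1 ×ˢ Set.Icc (0 : ℝ) 1, f p ^ 2 := by
  set L := ⨅ t : Set.Icc (0 : ℝ) 1, ∫ s in (0 : ℝ)..1, f (s, t) with hL
  have hnn : ∀ t : ℝ, 0 ≤ ∫ s in (0 : ℝ)..1, f (s, t) := fun t =>
    intervalIntegral.integral_nonneg zero_le_one fun s _ => h0 _
  have hL0 : 0 ≤ L := Real.iInf_nonneg fun t => hnn t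
  have hLt : ∀ t ∈ Set.Icc (0 : ℝ) 1, L ≤ ∫ s in Set.Icc (0 : ℝ) 1, f (s, t) := by
    intro t ht
    rw [integral_Icc_eq_integral_Ioc, ← intervalIntegral.integral_of_le zero_le_one]
    exact ciInf_le (f := fun t : Set.Icc (0 : ℝ) 1 => ∫ s in (0 : ℝ)..1, f (s, t))
      ⟨0, by rintro _ ⟨t, rfl⟩; exact hnn t⟩ ⟨t, ht⟩
  set ν : Measure ℝ := volume.restrict (Set.Icc (0 : ℝ) 1) with hν
  have : IsProbabilityMeasure ν := ⟨by simp [hν]⟩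
  have hprod : (volume : Measure (ℝ × ℝ)).restrict (Set.Icc (0 : ℝ) 1 ×ˢ Set.Icc (0 : ℝ) 1)
      = ν.prod ν := by
    rw [hν, Measure.prod_restrict, Measure.volume_eq_prod]
  rw [IntegrableOn, hprod] at hi
  rw [hprod]
  have hf1 : Integrable f (ν.prod ν) :=
    ((memLp_two_iff_integrable_sq hf.aestronglyMeasurable).2 hi).integrable one_le_two
  have hLf : L ≤ ∫ p, f p ∂ν.prod ν := by
    rw [integral_prod_symm _ hf1]
    calc L = ∫ _t, L ∂ν := by simp
      _ ≤ _ := integral_mono_ae (integrable_const _) hf1.integral_prod_right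
        (ae_restrict_of_forall_mem measurableSet_Icc hLt)
  have hexp : ∫ p, (f p - L) ^ 2 ∂ν.prod ν
      = (∫ p, f p ^ 2 ∂ν.prod ν) - 2 * L * (∫ p, f p ∂ν.prod ν) + L ^ 2 := by
    have e : (fun p => (f p - L) ^ 2) = fun p => f p ^ 2 - 2 * L * f p + L ^ 2 := by
      ext p; ring
    have hsub : Integrable (fun p => f p ^ 2 - 2 * L * f p) (ν.prod ν) :=
      hi.sub (hf1.const_mul _)
    rw [e, integral_add hsub (integrable_const _),
      integral_sub hi (hf1.const_mul _), integral_const_mul]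
    simp
  have hpos : 0 ≤ ∫ p, (f p - L) ^ 2 ∂ν.prod ν := integral_nonneg fun p => sq_nonneg _
  nlinarith [mul_le_mul_of_nonneg_left hLf hL0]

/-- Extremal length of the class `α₁` (horizontal loops) on the complex torus `ℂ/(ℤ + τℤ)`,
`Im τ > 0`: the greatest value of `(inf loop ρ-length)² / (Im τ · ∬ ρ²)` over admissible
densities `ρ` is `1 / Im τ`, attained by `ρ ≡ 1`. -/
theorem stmt_7 (τ : ℂ) (hτ : 0 < τ.im) :
    IsGreatest
      { x : ℝ | ∃ ρ : ℂ → ℝ, Measurable ρ ∧ (∀ z, 0 ≤ ρ z) ∧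
          IntegrableOn (fun p : ℝ × ℝ => ρ ((p.1 : ℂ) + (p.2 : ℂ) * τ) ^ 2)
            (Set.Icc (0 : ℝ) 1 ×ˢ Set.Icc (0 : ℝ) 1) ∧
          0 < (∫ p in Set.Icc (0 : ℝ) 1 ×ˢ Set.Icc (0 : ℝ) 1,
                ρ ((p.1 : ℂ) + (p.2 : ℂ) * τ) ^ 2) ∧
          x = (⨅ t : Set.Icc (0 : ℝ) 1,
                ∫ s in (0 : ℝ)..1, ρ ((s : ℂ) + ((t : ℝ) : ℂ) * τ)) ^ 2 /
              (τ.im * ∫ p in Set.Icc (0 : ℝ) 1 ×ˢ Set.Icc (0 : ℝ) 1,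
                ρ ((p.1 : ℂ) + (p.2 : ℂ) * τ) ^ 2) }
      (1 / τ.im) ∧
    (⨅ _t : Set.Icc (0 : ℝ) 1, ∫ _s in (0 : ℝ)..1, (1 : ℝ)) ^ 2 /
        (τ.im * ∫ _p in Set.Icc (0 : ℝ) 1 ×ˢ Set.Icc (0 : ℝ) 1, (1 : ℝ)) = 1 / τ.im := by
  have harea : ∫ _p in Set.Icc (0 : ℝ) 1 ×ˢ Set.Icc (0 : ℝ) 1, (1 : ℝ) = 1 := by
    rw [setIntegral_const, Measure.real, Measure.volume_eq_prod, Measure.prod_prod]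
    simp
  have hone : (⨅ _t : Set.Icc (0 : ℝ) 1, ∫ _s in (0 : ℝ)..1, (1 : ℝ)) ^ 2 /
        (τ.im * ∫ _p in Set.Icc (0 : ℝ) 1 ×ˢ Set.Icc (0 : ℝ) 1, (1 : ℝ)) = 1 / τ.im := by
    rw [harea]; simp
  refine ⟨⟨⟨fun _ => 1, measurable_const, fun _ => zero_le_one, ?_, ?_, ?_⟩, ?_⟩, hone⟩
  · simp only [one_pow]
    exact integrableOn_const (isCompact_Icc.prod isCompact_Icc).measure_lt_top.ne
  · simp only [one_pow, harea, zero_lt_one]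
  · simp only [one_pow] at hone ⊢
    exact hone.symm
  · rintro _ ⟨ρ, hρ, h0, hi, hpos, rfl⟩
    have key := sq_iInf_slice_le (fun p => ρ ((p.1 : ℂ) + (p.2 : ℂ) * τ))
      (hρ.comp (by fun_prop)) (fun _ => h0 _) hi
    rw [div_le_div_iff₀ (mul_pos hτ hpos) hτ]
    nlinarith [mul_le_mul_of_nonneg_left key hτ.le]
end

section
/- Let n ≥ 1 and let τ be a complex n×n matrix whose entrywise imaginary part B = Im τ (a real n×n matrix) has det B > 0. For s, t ∈ ℝⁿ write s + τ·t ∈ ℂⁿ for the vector with components s_j + Σ_k τ_{jk} t_k. Consider the set S of real numbers of the form (⨅_{t ∈ [0,1]ⁿ} ∫_{[0,1]ⁿ} ρ(s + τ·t) ds)² / (det B · ∫_{[0,1]ⁿ×[0,1]ⁿ} ρ(s + τ·t)² ds dt), where ρ ranges over all nonnegative measurable functions ρ : ℂⁿ → ℝ with 0 < ∫_{[0,1]ⁿ×[0,1]ⁿ} ρ(s + τ·t)² ds dt < ∞. Then 1/det B is the greatest element of S; the supremum is attained by ρ ≡ 1. -/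
/-!
On a product of probability spaces, if every fibre integral of `F` is at least `m ≥ 0`, then
Fubini gives `m ≤ ∬ F`, and integrating the pointwise inequality `2 m F - m² ≤ F²` yields
`m² ≤ ∬ F²` (`sq_le_integral_sq_of_fibre`). Since the unit cube `[0,1]ⁿ` has Lebesgue measure one,
this applied to `F (s, t) = ρ (s + τ t)` and to the infimum `m` of the fibre volumes bounds every
quotient by `1 / det B`; for `ρ ≡ 1` all integrals equal one, which gives equality.
-/

open MeasureTheory

/-- The length-area inequality: a lower bound `m ≥ 0` for almost all fibre integrals of `F` forces
`m²` to be a lower bound for the integral of `F²`. -/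
lemma sq_le_integral_sq_of_fibre {X Y : Type*} [MeasurableSpace X] [MeasurableSpace Y]
    (μ : Measure X) (ν : Measure Y) [IsProbabilityMeasure μ] [IsProbabilityMeasure ν]
    (F : X × Y → ℝ) (hF : Measurable F) (hF2 : Integrable (fun p => F p ^ 2) (μ.prod ν))
    (m : ℝ) (hm : 0 ≤ m) (h : ∀ᵐ t ∂ν, m ≤ ∫ s, F (s, t) ∂μ) :
    m ^ 2 ≤ ∫ p, F p ^ 2 ∂(μ.prod ν) := by
  have hFi : Integrable F (μ.prod ν) := by
    refine Integrable.mono' ((integrable_const (1 : ℝ)).add hF2) hF.aestronglyMeasurable ?_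
    refine Filter.Eventually.of_forall fun p => ?_
    simp only [Real.norm_eq_abs, Pi.add_apply]
    rw [abs_le]
    constructor <;> nlinarith [sq_nonneg (F p - 1), sq_nonneg (F p + 1)]
  have h1 : m ≤ ∫ p, F p ∂(μ.prod ν) := by
    rw [integral_prod_symm F hFi]
    calc m = ∫ _t, m ∂ν := by simp
      _ ≤ _ := integral_mono_ae (integrable_const m) hFi.integral_prod_right h
  have h2 : ∫ p, (2 * m * F p - m ^ 2) ∂(μ.prod ν) ≤ ∫ p, F p ^ 2 ∂(μ.prod ν) :=
    integral_mono ((hFi.const_mul _).sub (integrable_const _)) hF2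
      fun p => by
        change 2 * m * F p - m ^ 2 ≤ F p ^ 2
        nlinarith [sq_nonneg (F p - m)]
  rw [integral_sub (hFi.const_mul _) (integrable_const _), integral_const_mul] at h2
  simp only [integral_const, probReal_univ, one_smul] at h2
  nlinarith [mul_le_mul_of_nonneg_left h1 hm]

lemma volume_unitCube (n : ℕ) : volume (Set.Icc (0 : Fin n → ℝ) 1) = 1 := by
  simp [Real.volume_Icc_pi]

/-- Extremal volume of the real subtorus class on the torus `ℂⁿ/(ℤⁿ + τ·ℤⁿ)`, where
`τ` has entrywise imaginary part `B` with `det B > 0`: the greatest value of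
`(inf fibre ρ-volume)² / (det B · ∬ ρ²)` over admissible densities `ρ` is `1 / det B`,
attained by `ρ ≡ 1`. -/
theorem stmt_10 (n : ℕ) (hn : 1 ≤ n) (τ : Matrix (Fin n) (Fin n) ℂ)
    (B : Matrix (Fin n) (Fin n) ℝ) (hB : B = Matrix.of fun i j => (τ i j).im)
    (hdet : 0 < B.det) :
    IsGreatest
      { x : ℝ | ∃ ρ : (Fin n → ℂ) → ℝ, Measurable ρ ∧ (∀ z, 0 ≤ ρ z) ∧
          IntegrableOn
            (fun p : (Fin n → ℝ) × (Fin n → ℝ) =>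
              ρ (fun j => ((p.1 j : ℂ) + ∑ k, τ j k * (p.2 k : ℂ))) ^ 2)
            (Set.Icc (0 : Fin n → ℝ) 1 ×ˢ Set.Icc (0 : Fin n → ℝ) 1) ∧
          0 < (∫ p in Set.Icc (0 : Fin n → ℝ) 1 ×ˢ Set.Icc (0 : Fin n → ℝ) 1,
                ρ (fun j => ((p.1 j : ℂ) + ∑ k, τ j k * (p.2 k : ℂ))) ^ 2) ∧
          x = (⨅ t : Set.Icc (0 : Fin n → ℝ) 1,
                ∫ s in Set.Icc (0 : Fin n → ℝ) 1,
                  ρ (fun j => ((s j : ℂ) + ∑ k, τ j k * ((t : Fin n → ℝ) k : ℂ)))) ^ 2 /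
              (B.det * ∫ p in Set.Icc (0 : Fin n → ℝ) 1 ×ˢ Set.Icc (0 : Fin n → ℝ) 1,
                ρ (fun j => ((p.1 j : ℂ) + ∑ k, τ j k * (p.2 k : ℂ))) ^ 2) }
      (1 / B.det) ∧
    (⨅ _t : Set.Icc (0 : Fin n → ℝ) 1, ∫ _s in Set.Icc (0 : Fin n → ℝ) 1, (1 : ℝ)) ^ 2 /
        (B.det * ∫ _p in Set.Icc (0 : Fin n → ℝ) 1 ×ˢ Set.Icc (0 : Fin n → ℝ) 1, (1 : ℝ)) =
      1 / B.det := by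
  set K := Set.Icc (0 : Fin n → ℝ) 1 with hK
  have hvol : volume K = 1 := volume_unitCube n
  haveI : IsProbabilityMeasure (volume.restrict K) := ⟨by simp [hvol]⟩
  haveI : Nonempty K := ⟨⟨0, by simp [hK]⟩⟩
  have hprod : (volume : Measure ((Fin n → ℝ) × (Fin n → ℝ))).restrict (K ×ˢ K) =
      (volume.restrict K).prod (volume.restrict K) := by
    rw [Measure.prod_restrict, Measure.volume_eq_prod]
  have hone : (⨅ _t : K, ∫ _s in K, (1 : ℝ)) ^ 2 /
      (B.det * ∫ _p in K ×ˢ K, (1 : ℝ)) = 1 / B.det := by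
    rw [hprod]
    simp
  refine ⟨⟨⟨fun _ => 1, measurable_const, fun _ => zero_le_one, ?_, ?_, ?_⟩, ?_⟩, hone⟩
  · rw [IntegrableOn, hprod]
    exact integrable_const _
  · rw [hprod]
    simp
  · simpa using hone.symm
  · rintro x ⟨ρ, hρ, hρ0, hint, hpos, rfl⟩
    have hbdd : BddBelow (Set.range fun t : K => ∫ s in K,
        ρ (fun j => ((s j : ℂ) + ∑ k, τ j k * ((t : Fin n → ℝ) k : ℂ)))) :=
      ⟨0, by rintro _ ⟨t, rfl⟩; exact integral_nonneg fun s => hρ0 _⟩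
    have hkey := sq_le_integral_sq_of_fibre (volume.restrict K) (volume.restrict K)
      (fun p : (Fin n → ℝ) × (Fin n → ℝ) =>
        ρ (fun j => ((p.1 j : ℂ) + ∑ k, τ j k * (p.2 k : ℂ))))
      (hρ.comp (by fun_prop)) (by rw [← hprod]; exact hint)
      (⨅ t : K, ∫ s in K, ρ (fun j => ((s j : ℂ) + ∑ k, τ j k * ((t : Fin n → ℝ) k : ℂ))))
      (Real.iInf_nonneg fun t => integral_nonneg fun s => hρ0 _)
      ((ae_restrict_iff' measurableSet_Icc).2 (Filter.Eventually.of_forall fun t ht =>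
        ciInf_le hbdd ⟨t, ht⟩))
    rw [← hprod] at hkey
    rw [div_le_div_iff₀ (mul_pos hdet hpos) hdet]
    nlinarith [mul_le_mul_of_nonneg_left hkey hdet.le]
end

section
/- Let U ⊆ ℂ be a nonempty open connected set, let f, g : ℂ → ℂ be holomorphic on U (differentiable at every point of U), with f not identically zero on U. Let θ : ℂ → ℝ be continuous on U and suppose g(z) = exp(i·θ(z))·f(z) for all z ∈ U. Then θ is constant on U. -/
/-!
Near a point `z₀` with `f z₀ ≠ 0` the quotient `g / f = e^{iθ}` is holomorphic of modulus one, so by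
the maximum modulus principle it is a constant `c` there. The identity theorem propagates `g = c f`
to all of `U`, hence `e^{iθ} = c` off the zeros of `f`; these are isolated, so continuity of `θ`
gives `e^{iθ} = c` on all of `U`. Finally `t ↦ e^{it}` is a covering map `ℝ → Circle`, so a
continuous `θ` on a connected set with `e^{iθ}` constant is itself constant.
-/

open Filter Topology in
/-- If `f`, `g` are holomorphic on a nonempty open connected `U ⊆ ℂ`, `f` is not identically
zero on `U`, `θ` is real-valued and continuous on `U`, and `g = e^{iθ}·f` on `U`, then `θ`
is constant on `U`. -/
theorem stmt_11 (U : Set ℂ) (hne : U.Nonempty) (hopen : IsOpen U) (hconn : IsConnected U)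
    (f g : ℂ → ℂ)
    (hf : ∀ z ∈ U, DifferentiableAt ℂ f z) (hg : ∀ z ∈ U, DifferentiableAt ℂ g z)
    (hf0 : ∃ z ∈ U, f z ≠ 0)
    (θ : ℂ → ℝ) (hθ : ContinuousOn θ U)
    (heq : ∀ z ∈ U, g z = Complex.exp ((θ z : ℂ) * Complex.I) * f z) :
    ∀ z ∈ U, ∀ w ∈ U, θ z = θ w := by
  obtain ⟨z₀, hz₀, hfz₀⟩ := hf0
  have hfa : AnalyticOnNhd ℂ f U :=
    DifferentiableOn.analyticOnNhd (fun z hz => (hf z hz).differentiableWithinAt) hopen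
  have hga : AnalyticOnNhd ℂ g U :=
    DifferentiableOn.analyticOnNhd (fun z hz => (hg z hz).differentiableWithinAt) hopen
  have hquot : ∀ z ∈ U, f z ≠ 0 → g z / f z = Complex.exp ((θ z : ℂ) * Complex.I) := by
    intro z hz hfz
    rw [heq z hz, mul_div_cancel_right₀ _ hfz]
  have hnear : ∀ᶠ z in 𝓝 z₀, z ∈ U ∧ f z ≠ 0 :=
    (hopen.eventually_mem hz₀).and ((hf z₀ hz₀).continuousAt.eventually_ne hfz₀)
  have hlocal : ∀ᶠ z in 𝓝 z₀, g z / f z = g z₀ / f z₀ := by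
    refine Complex.eventually_eq_of_isLocalMax_norm (f := fun z => g z / f z) ?_ ?_
    · filter_upwards [hnear] with z hz
      exact (hg z hz.1).fun_div (hf z hz.1) hz.2
    · filter_upwards [hnear] with z hz
      simp only [Function.comp_apply]
      rw [hquot z hz.1 hz.2, hquot z₀ hz₀ hfz₀, Complex.norm_exp_ofReal_mul_I,
        Complex.norm_exp_ofReal_mul_I]
  have hglobal : Set.EqOn g (fun z => g z₀ / f z₀ * f z) U := by
    refine hga.eqOn_of_preconnected_of_eventuallyEq (analyticOnNhd_const.mul hfa)
      hconn.isPreconnected hz₀ ?_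
    filter_upwards [hlocal, hnear] with z hz hz'
    rw [← hz, div_mul_cancel₀ _ hz'.2]
  have hexp : ∀ z ∈ U, Complex.exp ((θ z : ℂ) * Complex.I) = g z₀ / f z₀ := by
    intro z hz
    have hnhds : ∀ᶠ w in 𝓝[≠] z, w ∈ U :=
      eventually_nhdsWithin_of_eventually_nhds (hopen.mem_nhds hz)
    have hfne : ∀ᶠ w in 𝓝[≠] z, f w ≠ 0 := by
      by_contra h
      exact hfz₀ (hfa.eqOn_zero_of_preconnected_of_frequently_eq_zero hconn.isPreconnected hz
        h hz₀)
    have hcont : ContinuousAt (fun w => Complex.exp ((θ w : ℂ) * Complex.I)) z := by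
      have := hθ.continuousAt (hopen.mem_nhds hz)
      fun_prop
    refine tendsto_nhds_unique (hcont.tendsto.mono_left (nhdsWithin_le_nhds (s := {z}ᶜ))) ?_
    refine tendsto_const_nhds.congr' ?_
    filter_upwards [hnhds, hfne] with w hw hfw
    rw [← hquot w hw hfw, hglobal hw, mul_div_cancel_right₀ _ hfw]
  intro z hz w hw
  refine Circle.isCoveringMap_exp.constOn_of_comp hconn.isPreconnected hθ ?_ hz hw
  intro a ha b hb
  apply Circle.ext
  rw [Circle.coe_exp, Circle.coe_exp, hexp a ha, hexp b hb]
end
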